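/- Assume (A1): each A(t), B(t) is a generator matrix, A(t) is weakly irreducible for every t ∈ [0,T] with quasi-stationary distribution ν(t), A is twice continuously differentiable and B is continuously differentiable on [0,T]. Let f : {1,…,m} → ℝ and F = (f(1),…,f(m))' ∈ ℝ^{m×1}. Then there exist constants K > 0 and ε₀ > 0 such that for every ε ∈ (0, ε₀], every row vector p ∈ ℝ^{1×m} with nonnegative entries summing to 1, and every t ∈ [0,T], | ∫_0^t p (P_ε(0,s) − 𝟙ν(s)) F ds | ≤ K ε max_{1≤i≤m} |f(i)|. -/

import Mathlib

/-!
The bound comes from a Poisson equation and one integration by parts, and needs no asymptotic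
expansion of `P_ε`.

Put `M(s) = A(s) - J`, with `J` the all-ones matrix. Uniqueness of the quasi-stationary distribution
makes `M(s)` invertible, and `h(s) = M(s)⁻¹ f` solves `A(s) h(s) = f - (ν(s)·f) 𝟙`
(`poisson_solution`). By Cramer's rule `h` is as smooth as `A`.

The row vector `x(s) = p P_ε(0,s)` satisfies `x' = x (A/ε + B)`. It has total mass one
(`sum_eq_of_forward`) and its `ℓ¹` norm is at most one (`l1_le_of_forward`), for every `ε`. Hence
`(x·h)' = ε⁻¹ (x·f - ν·f) + x·(B h + h')`; integrating, `∫ (x·f - ν·f)` is `ε` times a quantity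
bounded in terms of `sup |h|` and `sup |B h + h'|` only.
-/

open MeasureTheory Matrix ProbabilityTheory Filter

/-- An `m × m` real matrix `G` is a generator matrix if its off-diagonal entries are
nonnegative and every row sums to zero. -/
def IsGenerator {m : ℕ} (G : Matrix (Fin m) (Fin m) ℝ) : Prop :=
  (∀ i j, i ≠ j → 0 ≤ G i j) ∧ ∀ i, ∑ j, G i j = 0

/-- `ν` is the quasi-stationary distribution of a weakly irreducible generator `A`:
it is the unique solution of `ν A = 0`, `∑ ν i = 1`, and it is nonnegative. -/
def IsQuasiStationary {m : ℕ} (A : Matrix (Fin m) (Fin m) ℝ) (ν : Fin m → ℝ) : Prop :=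
  ν ᵥ* A = 0 ∧ (∑ i, ν i) = 1 ∧ (∀ i, 0 ≤ ν i) ∧
    ∀ μ : Fin m → ℝ, μ ᵥ* A = 0 → (∑ i, μ i) = 1 → μ = ν

/-- The matrix `𝟙ν` each of whose rows equals the row vector `ν`. -/
def oneNu {m : ℕ} (ν : Fin m → ℝ) : Matrix (Fin m) (Fin m) ℝ :=
  Matrix.of fun _ j => ν j

/-- `P` solves, on `[t₀, T]`, the forward equation `∂ₜ P(t) = P(t) G(t)`, `P(t₀) = I`
(stated entrywise). -/
def IsForwardSolution {m : ℕ} (G : ℝ → Matrix (Fin m) (Fin m) ℝ) (T t₀ : ℝ)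
    (P : ℝ → Matrix (Fin m) (Fin m) ℝ) : Prop :=
  P t₀ = 1 ∧ ∀ t ∈ Set.Icc t₀ T, ∀ i j,
    HasDerivWithinAt (fun u => P u i j) ((P t * G t) i j) (Set.Icc t₀ T) t

/-- Hypothesis (A1): `A(t)`, `B(t)` are generator matrices, `A(t)` is weakly irreducible with
quasi-stationary distribution `ν(t)` on `[0,T]`, `A` is `C²` and `B` is `C¹` on `[0,T]`. -/
def HypA1 {m : ℕ} (T : ℝ) (A B : ℝ → Matrix (Fin m) (Fin m) ℝ) (ν : ℝ → Fin m → ℝ) : Prop :=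
  (∀ t ∈ Set.Icc (0:ℝ) T, IsGenerator (A t)) ∧
  (∀ t ∈ Set.Icc (0:ℝ) T, IsGenerator (B t)) ∧
  (∀ t ∈ Set.Icc (0:ℝ) T, IsQuasiStationary (A t) (ν t)) ∧
  ContDiffOn ℝ 2 (fun t (i j : Fin m) => A t i j) (Set.Icc (0:ℝ) T) ∧
  ContDiffOn ℝ 1 (fun t (i j : Fin m) => B t i j) (Set.Icc (0:ℝ) T)

/-- The dissipativity estimate behind the `ℓ¹` bound: `d` plays the role of a smoothed sign of `x`,
with error at most `δ`. -/
lemma generator_dissipative {m : ℕ} {G : Matrix (Fin m) (Fin m) ℝ} (hG : IsGenerator G)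
    {x d : Fin m → ℝ} {δ : ℝ} (hd : ∀ i, |d i| ≤ 1)
    (hx : ∀ i, |x i| - d i * x i ≤ δ) :
    ∑ i, d i * (x ᵥ* G) i ≤ δ * ∑ j, -G j j := by
  have hcomm : ∑ i, d i * (x ᵥ* G) i = ∑ j, ∑ i, d i * (x j * G j i) := by
    simp only [vecMul, dotProduct, Finset.mul_sum]
    exact Finset.sum_comm
  rw [hcomm, Finset.mul_sum]
  refine Finset.sum_le_sum fun j _ => ?_
  have hdiag : G j j ≤ 0 := by
    have h1 := Finset.add_sum_erase Finset.univ (fun i => G j i) (Finset.mem_univ j)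
    have h2 : 0 ≤ ∑ i ∈ Finset.univ.erase j, G j i :=
      Finset.sum_nonneg fun i hi => hG.1 j i (Finset.ne_of_mem_erase hi).symm
    have h3 := hG.2 j
    linarith
  -- Subtracting `|x j|` times the zero row sum makes every off-diagonal term nonnegative.
  have hsum : ∑ i, (|x j| - d i * x j) * G j i = -∑ i, d i * (x j * G j i) := by
    have : ∀ i, (|x j| - d i * x j) * G j i = |x j| * G j i - d i * (x j * G j i) := fun i => by ring
    simp only [this, Finset.sum_sub_distrib, ← Finset.mul_sum, hG.2 j]
    ring
  have h1 := Finset.add_sum_erase Finset.univ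
    (fun i => (|x j| - d i * x j) * G j i) (Finset.mem_univ j)
  have h2 : 0 ≤ ∑ i ∈ Finset.univ.erase j, (|x j| - d i * x j) * G j i := by
    refine Finset.sum_nonneg fun i hi =>
      mul_nonneg ?_ (hG.1 j i (Finset.ne_of_mem_erase hi).symm)
    have : d i * x j ≤ |d i| * |x j| := by
      rw [← abs_mul]; exact le_abs_self _
    have := mul_le_mul_of_nonneg_right (hd i) (abs_nonneg (x j))
    linarith
  have h4 := mul_le_mul_of_nonpos_right (hx j) hdiag
  linarith

lemma hasDerivWithinAt_Ici_of_Icc {g : ℝ → ℝ} {g' T t : ℝ} (ht : t ∈ Set.Ico (0:ℝ) T)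
    (h : HasDerivWithinAt g g' (Set.Icc 0 T) t) : HasDerivWithinAt g g' (Set.Ici t) t := by
  have h1 : HasDerivWithinAt g g' (Set.Icc t T) t :=
    h.mono (Set.Icc_subset_Icc_left ht.1)
  exact h1.mono_of_mem_nhdsWithin (Icc_mem_nhdsGE ht.2)

lemma sum_eq_of_forward {m : ℕ} {T : ℝ} {G : ℝ → Matrix (Fin m) (Fin m) ℝ}
    (hG : ∀ t ∈ Set.Icc (0:ℝ) T, IsGenerator (G t)) {x : ℝ → Fin m → ℝ}
    (hx : ∀ t ∈ Set.Icc (0:ℝ) T, ∀ j,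
      HasDerivWithinAt (fun u => x u j) ((x t ᵥ* G t) j) (Set.Icc 0 T) t) :
    ∀ t ∈ Set.Icc (0:ℝ) T, ∑ j, x t j = ∑ j, x 0 j := by
  have hder : ∀ t ∈ Set.Icc (0:ℝ) T,
      HasDerivWithinAt (fun u => ∑ j, x u j) 0 (Set.Icc 0 T) t := by
    intro t ht
    have h0 : ∑ j, (x t ᵥ* G t) j = 0 := by
      simp only [vecMul, dotProduct]
      rw [Finset.sum_comm]
      simp only [← Finset.mul_sum, (hG t ht).2, mul_zero, Finset.sum_const_zero]
    exact (HasDerivWithinAt.fun_sum fun j _ => hx t ht j).congr_deriv h0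
  exact constant_of_has_deriv_right_zero (fun t ht => (hder t ht).continuousWithinAt)
    fun t ht => hasDerivWithinAt_Ici_of_Icc ht (hder t ⟨ht.1, ht.2.le⟩)

/-- The forward flow of a generator contracts the `ℓ¹` norm. The norm is smoothed to
`∑ √(x j ^ 2 + δ ^ 2)`, which grows at rate `O(δ)` by `generator_dissipative`, and `δ → 0`. -/
lemma l1_le_of_forward {m : ℕ} {T : ℝ} {G : ℝ → Matrix (Fin m) (Fin m) ℝ}
    (hG : ∀ t ∈ Set.Icc (0:ℝ) T, IsGenerator (G t))
    (hGc : ∀ j, ContinuousOn (fun t => G t j j) (Set.Icc 0 T)) {x : ℝ → Fin m → ℝ}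
    (hx : ∀ t ∈ Set.Icc (0:ℝ) T, ∀ j,
      HasDerivWithinAt (fun u => x u j) ((x t ᵥ* G t) j) (Set.Icc 0 T) t) :
    ∀ t ∈ Set.Icc (0:ℝ) T, ∑ j, |x t j| ≤ ∑ j, |x 0 j| := by
  intro t ht
  obtain ⟨C, hC⟩ : ∃ C, ∀ s ∈ Set.Icc (0:ℝ) T, ‖∑ j, -G s j j‖ ≤ C :=
    isCompact_Icc.exists_bound_of_continuousOn
      (continuousOn_finsetSum _ fun j _ => (hGc j).neg)
  have hC0 : 0 ≤ C := (norm_nonneg _).trans (hC t ht)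
  have key : ∀ δ > 0, ∑ j, |x t j| ≤ ∑ j, |x 0 j| + δ * (m + C * t) := by
    intro δ hδ
    have hpos : ∀ y : ℝ, 0 < y ^ 2 + δ ^ 2 := fun y => by positivity
    have habs : ∀ y : ℝ, |y| ≤ √(y ^ 2 + δ ^ 2) := fun y =>
      Real.abs_le_sqrt (by nlinarith)
    have hub : ∀ y : ℝ, √(y ^ 2 + δ ^ 2) ≤ |y| + δ := fun y => by
      rw [Real.sqrt_le_left (by positivity)]
      nlinarith [sq_abs y, mul_nonneg (abs_nonneg y) hδ.le]
    have hder : ∀ s ∈ Set.Icc (0:ℝ) T,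
        HasDerivWithinAt (fun u => ∑ j, √(x u j ^ 2 + δ ^ 2))
          (∑ j, x s j / √(x s j ^ 2 + δ ^ 2) * (x s ᵥ* G s) j) (Set.Icc 0 T) s := by
      intro s hs
      refine HasDerivWithinAt.fun_sum fun j _ => ?_
      have h := (((hx s hs j).fun_pow 2).add_const (δ ^ 2)).sqrt (hpos _).ne'
      refine h.congr_deriv ?_
      have := Real.sqrt_pos.2 (hpos (x s j))
      field_simp
      push_cast
      ring
    have hmain := image_le_of_deriv_right_le_deriv_boundary
      (f := fun u => ∑ j, √(x u j ^ 2 + δ ^ 2)) (a := 0) (b := T)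
      (f' := fun s => ∑ j, x s j / √(x s j ^ 2 + δ ^ 2) * (x s ᵥ* G s) j)
      (fun s hs => (hder s hs).continuousWithinAt)
      (fun s hs => hasDerivWithinAt_Ici_of_Icc hs (hder s ⟨hs.1, hs.2.le⟩))
      (B := fun s => ∑ j, √(x 0 j ^ 2 + δ ^ 2) + δ * C * s) (B' := fun _ => δ * C)
      (by simp) (by fun_prop)
      (fun s _ => by
        have h := ((hasDerivAt_id' s).const_mul (δ * C)).const_add
          (∑ j, √(x 0 j ^ 2 + δ ^ 2))
        rw [mul_one] at h
        exact h.hasDerivWithinAt)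
      (fun s hs => by
        have hs' : s ∈ Set.Icc (0:ℝ) T := ⟨hs.1, hs.2.le⟩
        refine (generator_dissipative (hG s hs') (δ := δ) (fun i => ?_) fun i => ?_).trans ?_
        · have := Real.sqrt_pos.2 (hpos (x s i))
          rw [abs_div, abs_of_pos this, div_le_one this]
          exact habs _
        · have h0 := Real.sqrt_pos.2 (hpos (x s i))
          have h1 := Real.sq_sqrt (hpos (x s i)).le
          rw [sub_le_iff_le_add, div_mul_eq_mul_div, ← sub_le_iff_le_add', le_div_iff₀ h0]
          have h2 := habs (x s i)
          have h3 := hub (x s i)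
          have h4 := sq_abs (x s i)
          nlinarith [abs_nonneg (x s i)]
        · exact mul_le_mul_of_nonneg_left ((le_abs_self _).trans (hC s hs')) hδ.le)
      ht
    calc ∑ j, |x t j| ≤ ∑ j, √(x t j ^ 2 + δ ^ 2) := Finset.sum_le_sum fun j _ => habs _
      _ ≤ ∑ j, √(x 0 j ^ 2 + δ ^ 2) + δ * C * t := hmain
      _ ≤ ∑ j, (|x 0 j| + δ) + δ * C * t := by
        gcongr with j
        exact hub _
      _ = ∑ j, |x 0 j| + δ * (m + C * t) := by
        simp [Finset.sum_add_distrib]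
        ring
  refine le_of_forall_pos_le_add fun η hη => ?_
  have hD : 0 < (m + C * t) + 1 := by have := mul_nonneg hC0 ht.1; positivity
  refine (key (η / ((m + C * t) + 1)) (by positivity)).trans ?_
  gcongr
  rw [div_mul_eq_mul_div, div_le_iff₀ hD]
  nlinarith

lemma det_sub_ones_ne_zero {m : ℕ} (hm : 1 ≤ m) {A : Matrix (Fin m) (Fin m) ℝ} {ν : Fin m → ℝ}
    (hA : IsGenerator A) (hν : IsQuasiStationary A ν) :
    (A - Matrix.of fun _ _ => (1:ℝ)).det ≠ 0 := by
  intro hdet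
  obtain ⟨v, hv0, hv⟩ := Matrix.exists_vecMul_eq_zero_iff.2 hdet
  have hcol : ∀ j, (v ᵥ* A) j = ∑ i, v i := by
    intro j
    have := congrFun hv j
    rw [vecMul_sub] at this
    simp only [Pi.sub_apply, Pi.zero_apply] at this
    rw [sub_eq_zero.1 this]
    simp [vecMul, dotProduct]
  have hsum : ∑ j, (v ᵥ* A) j = 0 := by
    simp only [vecMul, dotProduct]
    rw [Finset.sum_comm]
    simp only [← Finset.mul_sum, hA.2, mul_zero, Finset.sum_const_zero]
  have hv1 : ∑ i, v i = 0 := by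
    simp only [hcol, Finset.sum_const, Finset.card_univ, Fintype.card_fin, nsmul_eq_mul] at hsum
    rcases mul_eq_zero.1 hsum with h | h
    · have : m = 0 := by exact_mod_cast h
      omega
    · exact h
  have hvA : v ᵥ* A = 0 := by
    ext j
    simp [hcol, hv1]
  have := hν.2.2.2 (ν + v) (by rw [add_vecMul, hν.1, hvA, add_zero])
    (by simp [Finset.sum_add_distrib, hν.2.1, hv1])
  exact hv0 (by simpa using this)

/-- Pairing `A h = f + (𝟙·h) 𝟙` with `ν` identifies the additive constant as `-ν·f`. -/
lemma poisson_solution {m : ℕ} {A : Matrix (Fin m) (Fin m) ℝ} {ν f h : Fin m → ℝ}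
    (hν : IsQuasiStationary A ν)
    (hh : (A - Matrix.of fun _ _ => (1:ℝ)) *ᵥ h = f) :
    A *ᵥ h = fun i => f i - ν ⬝ᵥ f := by
  have h1 : ∀ i, (A *ᵥ h) i = f i + ∑ j, h j := by
    intro i
    have := congrFun hh i
    rw [sub_mulVec] at this
    simp only [Pi.sub_apply] at this
    rw [← this]
    simp [mulVec, dotProduct]
  have h2 : ν ⬝ᵥ (A *ᵥ h) = 0 := by rw [dotProduct_mulVec, hν.1, zero_dotProduct]
  have h3 : ν ⬝ᵥ (A *ᵥ h) = ν ⬝ᵥ f + ∑ j, h j := by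
    simp only [dotProduct, h1, mul_add, Finset.sum_add_distrib, ← Finset.sum_mul, hν.2.1, one_mul]
  ext i
  rw [h1]
  linarith

lemma contDiffOn_det {m : ℕ} {s : Set ℝ} {M : ℝ → Matrix (Fin m) (Fin m) ℝ}
    (hM : ∀ i j, ContDiffOn ℝ 1 (fun t => M t i j) s) :
    ContDiffOn ℝ 1 (fun t => (M t).det) s := by
  simp only [det_apply]
  refine ContDiffOn.sum fun σ _ => ?_
  exact (contDiffOn_prod fun i _ => hM _ _).const_smul _

/-- A continuously differentiable solution of the Poisson equation, given by Cramer's rule. -/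
lemma exists_poisson_family {m : ℕ} (hm : 1 ≤ m) {T : ℝ}
    {A : ℝ → Matrix (Fin m) (Fin m) ℝ} {ν : ℝ → Fin m → ℝ}
    (hA : ∀ t ∈ Set.Icc (0:ℝ) T, IsGenerator (A t))
    (hν : ∀ t ∈ Set.Icc (0:ℝ) T, IsQuasiStationary (A t) (ν t))
    (hAc : ∀ i j, ContDiffOn ℝ 1 (fun t => A t i j) (Set.Icc 0 T)) (f : Fin m → ℝ) :
    ∃ h : ℝ → Fin m → ℝ, (∀ i, ContDiffOn ℝ 1 (fun t => h t i) (Set.Icc 0 T)) ∧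
      ∀ t ∈ Set.Icc (0:ℝ) T, A t *ᵥ h t = fun i => f i - ν t ⬝ᵥ f := by
  set M : ℝ → Matrix (Fin m) (Fin m) ℝ := fun t => A t - Matrix.of fun _ _ => (1:ℝ) with hMdef
  have hM : ∀ i j, ContDiffOn ℝ 1 (fun t => M t i j) (Set.Icc 0 T) := fun i j =>
    (hAc i j).sub contDiffOn_const
  have hdet : ∀ t ∈ Set.Icc (0:ℝ) T, (M t).det ≠ 0 := fun t ht =>
    det_sub_ones_ne_zero hm (hA t ht) (hν t ht)
  refine ⟨fun t => (M t).det⁻¹ • (M t).cramer f, fun i => ?_, fun t ht => ?_⟩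
  · simp only [Pi.smul_apply, smul_eq_mul, cramer_apply]
    refine ((contDiffOn_det hM).inv hdet).mul (contDiffOn_det fun k j => ?_)
    by_cases hj : j = i
    · subst hj
      simpa using contDiffOn_const
    · simpa [updateCol_apply, hj] using hM k j
  · refine poisson_solution (hν t ht) ?_
    change M t *ᵥ _ = f
    rw [mulVec_smul, mulVec_cramer, smul_smul, inv_mul_cancel₀ (hdet t ht), one_smul]

lemma abs_dotProduct_le_of_l1 {m : ℕ} {x w : Fin m → ℝ} {C : ℝ} (hx : ∑ i, |x i| ≤ 1)
    (hC : 0 ≤ C) (hw : ∀ i, |w i| ≤ C) : |x ⬝ᵥ w| ≤ C := by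
  calc |x ⬝ᵥ w| ≤ ∑ i, |x i * w i| := Finset.abs_sum_le_sum_abs _ _
    _ ≤ ∑ i, |x i| * C := by
      refine Finset.sum_le_sum fun i _ => ?_
      rw [abs_mul]
      exact mul_le_mul_of_nonneg_left (hw i) (abs_nonneg _)
    _ = (∑ i, |x i|) * C := by rw [Finset.sum_mul]
    _ ≤ C := by nlinarith

lemma exists_uniform_bound {m : ℕ} {T : ℝ} {w : ℝ → Fin m → ℝ}
    (hw : ∀ i, ContinuousOn (fun t => w t i) (Set.Icc 0 T)) :
    ∃ C, 0 ≤ C ∧ ∀ t ∈ Set.Icc (0:ℝ) T, ∀ i, |w t i| ≤ C := by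
  obtain ⟨C, hC⟩ := isCompact_Icc.exists_bound_of_continuousOn (continuousOn_pi.2 hw)
  exact ⟨max C 0, le_max_right _ _, fun t ht i =>
    ((norm_le_pi_norm (w t) i).trans (hC t ht)).trans (le_max_left _ _)⟩

/-- The integrated identity `∫ (x·f - ν·f) = ε ((x·h)(t) - (x·h)(0) - ∫ x·(B h + h'))`, bounded. -/
lemma integral_bound_of_poisson {m : ℕ} {T : ℝ} {A B : ℝ → Matrix (Fin m) (Fin m) ℝ}
    {x h h' : ℝ → Fin m → ℝ} {ε C₁ C₂ : ℝ} (hε : 0 < ε)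
    (hAc : ∀ i j, ContinuousOn (fun t => A t i j) (Set.Icc 0 T))
    (hBc : ∀ i j, ContinuousOn (fun t => B t i j) (Set.Icc 0 T))
    (hx : ∀ t ∈ Set.Icc (0:ℝ) T, ∀ j,
      HasDerivWithinAt (fun u => x u j) ((x t ᵥ* (ε⁻¹ • A t + B t)) j) (Set.Icc 0 T) t)
    (hxl : ∀ t ∈ Set.Icc (0:ℝ) T, ∑ j, |x t j| ≤ 1)
    (hh : ∀ t ∈ Set.Icc (0:ℝ) T, ∀ j,
      HasDerivWithinAt (fun u => h u j) (h' t j) (Set.Icc 0 T) t)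
    (hh'c : ∀ j, ContinuousOn (fun t => h' t j) (Set.Icc 0 T))
    (hC₁ : 0 ≤ C₁) (hC₂ : 0 ≤ C₂)
    (hhb : ∀ t ∈ Set.Icc (0:ℝ) T, ∀ i, |h t i| ≤ C₁)
    (hwb : ∀ t ∈ Set.Icc (0:ℝ) T, ∀ i, |(B t *ᵥ h t + h' t) i| ≤ C₂)
    {t : ℝ} (ht : t ∈ Set.Icc (0:ℝ) T) :
    |∫ s in (0:ℝ)..t, x s ⬝ᵥ (A s *ᵥ h s)| ≤ (2 * C₁ + T * C₂) * ε := by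
  have hxc : ∀ j, ContinuousOn (fun t => x t j) (Set.Icc 0 T) := fun j s hs =>
    (hx s hs j).continuousWithinAt
  have hhc : ∀ j, ContinuousOn (fun t => h t j) (Set.Icc 0 T) := fun j s hs =>
    (hh s hs j).continuousWithinAt
  set a : ℝ → ℝ := fun s => x s ⬝ᵥ (A s *ᵥ h s) with ha
  set r : ℝ → ℝ := fun s => x s ⬝ᵥ (B s *ᵥ h s + h' s) with hr
  have hac : ContinuousOn a (Set.Icc 0 T) := by
    simp only [ha, dotProduct, mulVec]
    exact continuousOn_finsetSum _ fun i _ => (hxc i).mul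
      (continuousOn_finsetSum _ fun j _ => (hAc i j).mul (hhc j))
  have hrc : ContinuousOn r (Set.Icc 0 T) := by
    simp only [hr, dotProduct, mulVec, Pi.add_apply]
    exact continuousOn_finsetSum _ fun i _ => (hxc i).mul
      ((continuousOn_finsetSum _ fun j _ => (hBc i j).mul (hhc j)).add (hh'c i))
  have hu : ∀ s ∈ Set.Icc (0:ℝ) T,
      HasDerivWithinAt (fun v => x v ⬝ᵥ h v) (ε⁻¹ * a s + r s) (Set.Icc 0 T) s := by
    intro s hs
    have h1 : HasDerivWithinAt (fun v => x v ⬝ᵥ h v)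
        (∑ j, ((x s ᵥ* (ε⁻¹ • A s + B s)) j * h s j + x s j * h' s j)) (Set.Icc 0 T) s :=
      HasDerivWithinAt.fun_sum fun j _ => (hx s hs j).mul (hh s hs j)
    refine h1.congr_deriv ?_
    rw [Finset.sum_add_distrib]
    change (x s ᵥ* (ε⁻¹ • A s + B s)) ⬝ᵥ h s + x s ⬝ᵥ h' s = _
    rw [← dotProduct_mulVec, add_mulVec, smul_mulVec, dotProduct_add, dotProduct_smul]
    simp only [ha, hr, dotProduct_add, smul_eq_mul]
    ring
  have hsub : Set.Icc 0 t ⊆ Set.Icc 0 T := Set.Icc_subset_Icc_right ht.2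
  have hai : IntervalIntegrable a volume 0 t :=
    (hac.mono hsub).intervalIntegrable_of_Icc ht.1
  have hri : IntervalIntegrable r volume 0 t :=
    (hrc.mono hsub).intervalIntegrable_of_Icc ht.1
  have hftc : ∫ s in (0:ℝ)..t, (ε⁻¹ * a s + r s) = x t ⬝ᵥ h t - x 0 ⬝ᵥ h 0 := by
    refine intervalIntegral.integral_eq_sub_of_hasDeriv_right_of_le ht.1
      (fun s hs => ((hu s (hsub hs)).continuousWithinAt).mono hsub) (fun s hs => ?_)
      ((hai.const_mul _).add hri)
    exact (hasDerivWithinAt_Ici_of_Icc ⟨hs.1.le, hs.2.trans_le ht.2⟩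
      (hu s ⟨hs.1.le, hs.2.le.trans ht.2⟩)).mono Set.Ioi_subset_Ici_self
  rw [intervalIntegral.integral_add (hai.const_mul _) hri,
    intervalIntegral.integral_const_mul] at hftc
  have hid : ∫ s in (0:ℝ)..t, a s
      = (x t ⬝ᵥ h t - x 0 ⬝ᵥ h 0 - ∫ s in (0:ℝ)..t, r s) * ε := by
    rw [← hftc]
    field_simp
    ring
  have h0 : (0:ℝ) ∈ Set.Icc (0:ℝ) T := ⟨le_rfl, ht.1.trans ht.2⟩
  have hb1 := abs_dotProduct_le_of_l1 (hxl t ht) hC₁ (hhb t ht)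
  have hb2 := abs_dotProduct_le_of_l1 (hxl 0 h0) hC₁ (hhb 0 h0)
  have hb3 : |∫ s in (0:ℝ)..t, r s| ≤ C₂ * |t - 0| := by
    rw [← Real.norm_eq_abs]
    refine intervalIntegral.norm_integral_le_of_norm_le_const fun s hs => ?_
    rw [Set.uIoc_of_le ht.1] at hs
    have hs' : s ∈ Set.Icc (0:ℝ) T := ⟨hs.1.le, hs.2.trans ht.2⟩
    exact abs_dotProduct_le_of_l1 (hxl s hs') hC₂ (hwb s hs')
  rw [sub_zero, abs_of_nonneg ht.1] at hb3
  have hb4 : C₂ * t ≤ T * C₂ := by nlinarith [ht.2]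
  rw [hid, abs_mul, abs_of_pos hε]
  refine mul_le_mul_of_nonneg_right ?_ hε.le
  rw [abs_le] at *
  constructor <;> linarith [hb1.1, hb1.2, hb2.1, hb2.2, hb3.1, hb3.2]

/-- cf. (3.10). Under (A1), there are `K, ε₀ > 0` such that for every
`ε ∈ (0,ε₀]`, every probability row vector `p`, and every `t ∈ [0,T]`,
`|∫_0^t p (P_ε(0,s) - 𝟙ν(s)) F ds| ≤ K ε max_i |f(i)|`. -/
theorem initial_layer_integral_bound {m : ℕ} (hm : 1 ≤ m) (T : ℝ) (hT : 0 < T)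
    (A B : ℝ → Matrix (Fin m) (Fin m) ℝ) (ν : ℝ → Fin m → ℝ)
    (hA1 : HypA1 T A B ν) (f : Fin m → ℝ) :
    ∃ K ε₀ : ℝ, 0 < K ∧ 0 < ε₀ ∧ ∀ ε ∈ Set.Ioc (0:ℝ) ε₀,
      ∀ P : ℝ → Matrix (Fin m) (Fin m) ℝ,
        IsForwardSolution (fun u => ε⁻¹ • A u + B u) T 0 P →
      ∀ p : Fin m → ℝ, (∀ i, 0 ≤ p i) → (∑ i, p i) = 1 →
      ∀ t ∈ Set.Icc (0:ℝ) T,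
        |∫ s in (0:ℝ)..t, (p ᵥ* (P s - oneNu (ν s))) ⬝ᵥ f|
          ≤ K * ε * ⨆ i, |f i| := by
  obtain ⟨hA, hB, hν, hAc, hBc⟩ := hA1
  have hAij : ∀ i j, ContDiffOn ℝ 1 (fun t => A t i j) (Set.Icc 0 T) := fun i j =>
    (contDiffOn_pi.1 (contDiffOn_pi.1 hAc i) j).of_le (by norm_num)
  have hBij : ∀ i j, ContDiffOn ℝ 1 (fun t => B t i j) (Set.Icc 0 T) := fun i j =>
    contDiffOn_pi.1 (contDiffOn_pi.1 hBc i) j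
  obtain ⟨h, hhC, hhP⟩ := exists_poisson_family hm hA hν hAij f
  set h' : ℝ → Fin m → ℝ := fun t j => derivWithin (fun u => h u j) (Set.Icc 0 T) t with hh'
  have hhd : ∀ t ∈ Set.Icc (0:ℝ) T, ∀ j,
      HasDerivWithinAt (fun u => h u j) (h' t j) (Set.Icc 0 T) t := fun t ht j =>
    ((hhC j).differentiableOn one_ne_zero t ht).hasDerivWithinAt
  have hh'c : ∀ j, ContinuousOn (fun t => h' t j) (Set.Icc 0 T) := fun j =>
    (hhC j).continuousOn_derivWithin (uniqueDiffOn_Icc hT) le_rfl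
  obtain ⟨C₁, hC₁, hhb⟩ := exists_uniform_bound fun i => (hhC i).continuousOn
  obtain ⟨C₂, hC₂, hwb⟩ := exists_uniform_bound (T := T) (w := fun t => B t *ᵥ h t + h' t)
    fun i => by
      simp only [Pi.add_apply, mulVec, dotProduct]
      exact (continuousOn_finsetSum _ fun j _ =>
        (hBij i j).continuousOn.mul (hhC j).continuousOn).add (hh'c i)
  have hle : ∀ i, |f i| ≤ ⨆ i, |f i| := fun i =>
    le_ciSup (f := fun i => |f i|) (Set.finite_range _).bddAbove i
  have hS0 : 0 ≤ ⨆ i, |f i| := Real.iSup_nonneg fun i => abs_nonneg _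
  rcases hS0.eq_or_lt with hS | hS
  · -- Here `f = 0`, so both sides vanish.
    have hf : f = 0 := by
      ext i
      have := hle i
      rw [← hS] at this
      exact abs_eq_zero.1 (le_antisymm this (abs_nonneg _))
    refine ⟨1, 1, one_pos, one_pos, fun ε _ P _ p _ _ t _ => ?_⟩
    rw [← hS, hf]
    simp
  refine ⟨(2 * C₁ + T * C₂ + 1) / ⨆ i, |f i|, 1, by positivity, one_pos, ?_⟩
  intro ε hε P hP p hp0 hp1 t ht
  have hεi : 0 < ε⁻¹ := inv_pos.2 hε.1
  have hG : ∀ s ∈ Set.Icc (0:ℝ) T, IsGenerator (ε⁻¹ • A s + B s) := by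
    intro s hs
    refine ⟨fun i j hij => ?_, fun i => ?_⟩
    · exact add_nonneg (mul_nonneg hεi.le ((hA s hs).1 i j hij)) ((hB s hs).1 i j hij)
    · simp [Finset.sum_add_distrib, ← Finset.mul_sum, (hA s hs).2 i, (hB s hs).2 i]
  have hx : ∀ s ∈ Set.Icc (0:ℝ) T, ∀ j, HasDerivWithinAt (fun u => (p ᵥ* P u) j)
      (((p ᵥ* P s) ᵥ* (ε⁻¹ • A s + B s)) j) (Set.Icc 0 T) s := by
    intro s hs j
    rw [vecMul_vecMul]
    simp only [vecMul, dotProduct]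
    exact HasDerivWithinAt.fun_sum fun i _ => (hP.2 s hs i j).const_mul (p i)
  have hx0 : p ᵥ* P 0 = p := by rw [hP.1, vecMul_one]
  have hsum := sum_eq_of_forward hG hx
  have hl1 := l1_le_of_forward hG (fun j => ((hAij j j).continuousOn.const_smul ε⁻¹).add
    (hBij j j).continuousOn) hx
  simp only [hx0, hp1, fun i => abs_of_nonneg (hp0 i)] at hsum hl1
  have hint : ∫ s in (0:ℝ)..t, (p ᵥ* (P s - oneNu (ν s))) ⬝ᵥ f
      = ∫ s in (0:ℝ)..t, (p ᵥ* P s) ⬝ᵥ (A s *ᵥ h s) := by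
    refine intervalIntegral.integral_congr fun s hs => ?_
    rw [Set.uIcc_of_le ht.1] at hs
    have hs' : s ∈ Set.Icc (0:ℝ) T := ⟨hs.1, hs.2.trans ht.2⟩
    have hone : p ᵥ* oneNu (ν s) = ν s := by
      ext j
      simp [vecMul, dotProduct, oneNu, ← Finset.sum_mul, hp1]
    have hrhs : (p ᵥ* P s) ⬝ᵥ (fun i => f i - ν s ⬝ᵥ f)
        = (p ᵥ* P s) ⬝ᵥ f - (∑ i, (p ᵥ* P s) i) * (ν s ⬝ᵥ f) := by
      rw [Finset.sum_mul]
      simp only [dotProduct, mul_sub, Finset.sum_sub_distrib]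
    rw [hhP s hs', hrhs, hsum s hs', one_mul, vecMul_sub, sub_dotProduct, hone]
  rw [hint]
  refine (integral_bound_of_poisson hε.1 (fun i j => (hAij i j).continuousOn)
    (fun i j => (hBij i j).continuousOn) hx hl1 hhd hh'c hC₁ hC₂ hhb hwb ht).trans ?_
  have : (2 * C₁ + T * C₂ + 1) / (⨆ i, |f i|) * ε * (⨆ i, |f i|)
      = (2 * C₁ + T * C₂ + 1) * ε := by
    field_simp
  rw [this]
  exact mul_le_mul_of_nonneg_right (by linarith) hε.1.le
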